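/- Let θ ∈ (0, 1/2] be such that θ⁻¹ ≥ 2 is an integer, and let U : S_{T[θ,S₁]} → S_{T[θ,S₁]} be a surjective isometry of the unit sphere of T[θ, S₁]. Then there exist a sequence (ε_i)_{i=1}^∞ with values in {−1, 1} and a permutation π of {1, 2, …, θ⁻¹} such that for every x ∈ S_{T[θ,S₁]} with basis expansion x = Σ_{i=1}^∞ a_i e_i one has U(x) = Σ_{i=1}^{θ⁻¹} ε_i a_i e_{π(i)} + Σ_{i=θ⁻¹+1}^∞ ε_i a_i e_i. -/

import Mathlib

open scoped BigOperators

noncomputable section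

/-- Projection of a finitely supported vector onto the coordinates in `E`. -/
def tsProj (E : Finset ℕ+) (x : ℕ+ →₀ ℝ) : ℕ+ →₀ ℝ :=
  x.filter fun i => i ∈ E

/-- The Schreier families `S_n` on the positive integers:
`S₁` consists of the sets `F` with `|F| ≤ min F` (together with `∅`), and `S_{n+1}`
consists of unions `F₁ ∪ ⋯ ∪ F_d` of nonempty members `F₁ < ⋯ < F_d` of `S_n`
with `d ≤ min F₁` (together with `∅`). -/
def Schreier : ℕ → Set (Finset ℕ+)
  | 0 => {F | F.card ≤ 1}
  | 1 => {F | ∀ a ∈ F, F.card ≤ (a : ℕ)}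
  | n + 2 =>
      {F | F = ∅ ∨
        ∃ (d : ℕ) (G : Fin d → Finset ℕ+),
          0 < d ∧ (∀ i, G i ∈ Schreier (n + 1)) ∧ (∀ i, (G i).Nonempty) ∧
          (∀ i j : Fin d, i < j → ∀ a ∈ G i, ∀ b ∈ G j, a < b) ∧
          (∀ i, ∀ a ∈ G i, d ≤ (a : ℕ)) ∧ F = Finset.univ.biUnion G}

/-- A tuple of nonempty finite sets `E 0 < E 1 < ⋯` whose set of minima belongs to `S`. -/
def TsAdmissible (S : Set (Finset ℕ+)) {d : ℕ} (E : Fin d → Finset ℕ+) : Prop :=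
  (∀ i, (E i).Nonempty) ∧
  (∀ i j : Fin d, i < j → ∀ a ∈ E i, ∀ b ∈ E j, a < b) ∧
  ∃ μ : Fin d → ℕ+, (∀ i, IsLeast (↑(E i) : Set ℕ+) (μ i)) ∧
    Finset.univ.image μ ∈ S

/-- The iterated norms `‖·‖_m` in the construction of the Tsirelson norm:
`‖x‖₀` is the supremum norm and
`‖x‖_{m+1} = max(‖x‖_m, sup{θ ∑ᵢ ‖Eᵢ x‖_m : E₁ < ⋯ < E_d, {min Eᵢ} ∈ S})`. -/
def tnormAux (θ : ℝ) (S : Set (Finset ℕ+)) : ℕ → (ℕ+ →₀ ℝ) → ℝ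
  | 0, x => ⨆ i, |x i|
  | m + 1, x =>
      max (tnormAux θ S m x)
        (sSup {r : ℝ | ∃ (d : ℕ) (E : Fin d → Finset ℕ+), TsAdmissible S E ∧
          r = θ * ∑ i, tnormAux θ S m (tsProj (E i) x)})

/-- The Tsirelson norm `‖x‖_{θ,S} = sup_m ‖x‖_m` on `c₀₀`. -/
def tnorm (θ : ℝ) (S : Set (Finset ℕ+)) (x : ℕ+ →₀ ℝ) : ℝ :=
  ⨆ m : ℕ, tnormAux θ S m x

/-- `X`, together with the sequence `e` of unit vectors, is (a realization of) the
Tsirelson space `T[θ, S_n]`: a Banach space containing `c₀₀` isometrically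
(w.r.t. the Tsirelson norm) as a dense subspace, in which `(e i)` is a
(1-unconditional) basis, i.e. every `x` has a unique expansion `x = ∑ᵢ aᵢ eᵢ`. -/
structure IsTsirelsonSpace (θ : ℝ) (n : ℕ) (X : Type*) [NormedAddCommGroup X]
    [NormedSpace ℝ X] (e : ℕ+ → X) : Prop where
  complete : CompleteSpace X
  norm_embed : ∀ a : ℕ+ →₀ ℝ, ‖a.sum fun i c => c • e i‖ = tnorm θ (Schreier n) a
  dense_embed : DenseRange fun a : ℕ+ →₀ ℝ => a.sum fun i c => c • e i
  expansion : ∀ x : X, ∃! a : ℕ+ → ℝ, HasSum (fun i => a i • e i) x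

section TsPart1

variable {θ : ℝ}

lemma ts_schreier_one (F : Finset ℕ+) : F ∈ Schreier 1 ↔ ∀ a ∈ F, F.card ≤ (a : ℕ) := by
  simp [Schreier]

lemma ts_adm_iff {d : ℕ} (E : Fin d → Finset ℕ+) :
    TsAdmissible (Schreier 1) E ↔ (∀ i, (E i).Nonempty) ∧
      (∀ i j : Fin d, i < j → ∀ a ∈ E i, ∀ b ∈ E j, a < b) ∧
      ∀ i, ∀ a ∈ E i, d ≤ (a : ℕ) := by
  constructor
  · rintro ⟨h1, h2, μ, h3, h4⟩
    refine ⟨h1, h2, fun i a ha => ?_⟩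
    have hinj : Function.Injective μ := by
      intro i j hij
      rcases lt_trichotomy i j with h | h | h
      · exact absurd (h2 i j h _ (h3 i).1 _ (h3 j).1) (by simp [hij])
      · exact h
      · exact absurd (h2 j i h _ (h3 j).1 _ (h3 i).1) (by simp [hij])
    rw [ts_schreier_one] at h4
    have := h4 (μ i) (by simp)
    rw [Finset.card_image_of_injective _ hinj] at this
    simp only [Finset.card_univ, Fintype.card_fin] at this
    have h5 : μ i ≤ a := (h3 i).2 ha
    exact this.trans h5
  · rintro ⟨h1, h2, h3⟩
    refine ⟨h1, h2, fun i => (E i).min' (h1 i), fun i => Finset.isLeast_min' _ _, ?_⟩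
    rw [ts_schreier_one]
    intro a ha
    have hc : (Finset.univ.image fun i => (E i).min' (h1 i)).card ≤ d :=
      Finset.card_image_le.trans (by simp)
    obtain ⟨i, -, rfl⟩ := Finset.mem_image.1 ha
    exact hc.trans (h3 i _ (Finset.min'_mem _ _))

/-- the l1 norm -/
def tsL1 (x : ℕ+ →₀ ℝ) : ℝ := x.sum fun _ c => |c|

lemma tsL1_nonneg (x : ℕ+ →₀ ℝ) : 0 ≤ tsL1 x :=
  Finset.sum_nonneg fun _ _ => abs_nonneg _

lemma tsL1_eq (x : ℕ+ →₀ ℝ) {s : Finset ℕ+} (hs : x.support ⊆ s) :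
    tsL1 x = ∑ i ∈ s, |x i| :=
  Finsupp.sum_of_support_subset _ hs _ (by simp)

lemma abs_le_tsL1 (x : ℕ+ →₀ ℝ) (i : ℕ+) : |x i| ≤ tsL1 x := by
  rw [tsL1_eq x (Finset.subset_insert i x.support)]
  exact Finset.single_le_sum (f := fun i => |x i|) (fun _ _ => abs_nonneg _) (by simp)

lemma tsProj_apply (E : Finset ℕ+) (x : ℕ+ →₀ ℝ) (i : ℕ+) :
    tsProj E x i = if i ∈ E then x i else 0 := by
  simp [tsProj, Finsupp.filter_apply]

lemma tsProj_tsProj (E F : Finset ℕ+) (x : ℕ+ →₀ ℝ) :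
    tsProj E (tsProj F x) = tsProj F (tsProj E x) := by
  ext i; simp only [tsProj_apply]; split_ifs <;> rfl

lemma tsProj_add (E : Finset ℕ+) (x y : ℕ+ →₀ ℝ) :
    tsProj E (x + y) = tsProj E x + tsProj E y := by
  ext i; simp only [tsProj_apply, Finsupp.add_apply]; split_ifs <;> simp

lemma abs_tsProj_le (E : Finset ℕ+) (x : ℕ+ →₀ ℝ) (i : ℕ+) : |tsProj E x i| ≤ |x i| := by
  rw [tsProj_apply]; split_ifs <;> simp

/-- disjoint families -/
lemma sum_tsL1_le {d : ℕ} (E : Fin d → Finset ℕ+)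
    (h2 : ∀ i j : Fin d, i < j → ∀ a ∈ E i, ∀ b ∈ E j, a < b) (x : ℕ+ →₀ ℝ) :
    ∑ i, tsL1 (tsProj (E i) x) ≤ tsL1 x := by
  have h : ∀ i, tsL1 (tsProj (E i) x) = ∑ j ∈ x.support, |tsProj (E i) x j| := fun i => by
    apply tsL1_eq
    intro j hj
    simp only [Finsupp.mem_support_iff, tsProj_apply] at hj ⊢
    intro h; simp [h] at hj
  simp_rw [h]
  rw [Finset.sum_comm]
  apply Finset.sum_le_sum
  intro j _
  by_cases hj : ∃ i, j ∈ E i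
  · obtain ⟨i, hi⟩ := hj
    rw [Finset.sum_eq_single i]
    · exact abs_tsProj_le _ _ _
    · intro l _ hl
      have : j ∉ E l := by
        intro hjl
        rcases lt_or_gt_of_ne hl with h | h
        · exact lt_irrefl _ (h2 _ _ h _ hjl _ hi)
        · exact lt_irrefl _ (h2 _ _ h _ hi _ hjl)
      simp [tsProj_apply, this]
    · simp
  · push Not at hj
    rw [Finset.sum_eq_zero]
    · exact abs_nonneg _
    · intro l _; simp [tsProj_apply, hj l]

lemma tnormAux_bd (h0 : 0 < θ) (h1 : θ ≤ 1) (m : ℕ) : ∀ x : ℕ+ →₀ ℝ,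
    0 ≤ tnormAux θ (Schreier 1) m x ∧ tnormAux θ (Schreier 1) m x ≤ tsL1 x := by
  induction m with
  | zero =>
    intro x
    simp only [tnormAux]
    exact ⟨Real.iSup_nonneg fun _ => abs_nonneg _, ciSup_le (abs_le_tsL1 x)⟩
  | succ m ih =>
    intro x
    simp only [tnormAux]
    refine ⟨le_max_of_le_left (ih x).1, max_le (ih x).2 (Real.sSup_le ?_ (tsL1_nonneg x))⟩
    rintro r ⟨d, E, hE, rfl⟩
    rw [ts_adm_iff] at hE
    have h3 : ∑ i, tnormAux θ (Schreier 1) m (tsProj (E i) x) ≤ tsL1 x :=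
      (Finset.sum_le_sum fun i _ => (ih _).2).trans (sum_tsL1_le E hE.2.1 x)
    have := tsL1_nonneg x
    nlinarith

lemma tnormAux_term_le (h0 : 0 < θ) (h1 : θ ≤ 1) (m : ℕ) (x : ℕ+ →₀ ℝ) {d : ℕ}
    (E : Fin d → Finset ℕ+) (hE : TsAdmissible (Schreier 1) E) :
    θ * ∑ i, tnormAux θ (Schreier 1) m (tsProj (E i) x) ≤ tnormAux θ (Schreier 1) (m+1) x := by
  rw [tnormAux.eq_2]
  refine le_max_of_le_right (le_csSup ⟨tsL1 x, ?_⟩ ⟨d, E, hE, rfl⟩)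
  rintro r ⟨d, E, hE, rfl⟩
  rw [ts_adm_iff] at hE
  have h3 : ∑ i, tnormAux θ (Schreier 1) m (tsProj (E i) x) ≤ tsL1 x :=
    (Finset.sum_le_sum fun i _ => (tnormAux_bd h0 h1 m _).2).trans (sum_tsL1_le E hE.2.1 x)
  have := tsL1_nonneg x
  nlinarith

lemma tnormAux_mono (m : ℕ) (x : ℕ+ →₀ ℝ) :
    tnormAux θ (Schreier 1) m x ≤ tnormAux θ (Schreier 1) (m+1) x := by
  rw [tnormAux.eq_2]; exact le_max_left _ _

lemma tnorm_bdd (h0 : 0 < θ) (h1 : θ ≤ 1) (x : ℕ+ →₀ ℝ) :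
    BddAbove (Set.range fun m => tnormAux θ (Schreier 1) m x) :=
  ⟨tsL1 x, by rintro _ ⟨m, rfl⟩; exact (tnormAux_bd h0 h1 m x).2⟩

lemma tnormAux_le (h0 : 0 < θ) (h1 : θ ≤ 1) (m : ℕ) (x : ℕ+ →₀ ℝ) :
    tnormAux θ (Schreier 1) m x ≤ tnorm θ (Schreier 1) x :=
  le_ciSup (tnorm_bdd h0 h1 x) m

lemma tnorm_le_l1 (h0 : 0 < θ) (h1 : θ ≤ 1) (x : ℕ+ →₀ ℝ) :
    tnorm θ (Schreier 1) x ≤ tsL1 x := ciSup_le fun m => (tnormAux_bd h0 h1 m x).2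

lemma abs_le_tnorm (h0 : 0 < θ) (h1 : θ ≤ 1) (x : ℕ+ →₀ ℝ) (i : ℕ+) :
    |x i| ≤ tnorm θ (Schreier 1) x := by
  refine le_trans ?_ (tnormAux_le h0 h1 0 x)
  simp only [tnormAux]
  exact le_ciSup (f := fun i => |x i|) ⟨tsL1 x, by rintro _ ⟨m, rfl⟩; exact abs_le_tsL1 x m⟩ i

lemma tnorm_lb (h0 : 0 < θ) (h1 : θ ≤ 1) (x : ℕ+ →₀ ℝ) {d : ℕ}
    (E : Fin d → Finset ℕ+) (hE : TsAdmissible (Schreier 1) E) :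
    θ * ∑ i, tnorm θ (Schreier 1) (tsProj (E i) x) ≤ tnorm θ (Schreier 1) x := by
  have ht : ∀ y : ℕ+ →₀ ℝ, Filter.Tendsto (fun m => tnormAux θ (Schreier 1) m y) Filter.atTop
      (nhds (tnorm θ (Schreier 1) y)) := fun y =>
    tendsto_atTop_ciSup (monotone_nat_of_le_succ fun m => tnormAux_mono m y) (tnorm_bdd h0 h1 y)
  have := (tendsto_finsetSum Finset.univ fun i (_ : i ∈ Finset.univ) =>
    ht (tsProj (E i) x)).const_mul θ
  exact le_of_tendsto' this fun m => (tnormAux_term_le h0 h1 m x E hE).trans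
    (tnormAux_le h0 h1 (m+1) x)

/-- monotonicity -/
lemma tnormAux_abs_mono (h0 : 0 < θ) (h1 : θ ≤ 1) (m : ℕ) : ∀ x y : ℕ+ →₀ ℝ,
    (∀ i, |x i| ≤ |y i|) → tnormAux θ (Schreier 1) m x ≤ tnormAux θ (Schreier 1) m y := by
  induction m with
  | zero =>
    intro x y h
    simp only [tnormAux]
    exact ciSup_mono ⟨tsL1 y, by rintro _ ⟨m, rfl⟩; exact abs_le_tsL1 y m⟩ h
  | succ m ih =>
    intro x y h
    rw [tnormAux.eq_2]
    refine max_le ((ih x y h).trans (tnormAux_mono m y))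
      (Real.sSup_le ?_ (tnormAux_bd h0 h1 _ _).1)
    rintro r ⟨d, E, hE, rfl⟩
    refine le_trans ?_ (tnormAux_term_le h0 h1 m y E hE)
    refine mul_le_mul_of_nonneg_left (Finset.sum_le_sum fun i _ => ih _ _ fun j => ?_) h0.le
    simp only [tsProj_apply]
    split_ifs
    · exact h j
    · simp

lemma tnorm_abs_mono (h0 : 0 < θ) (h1 : θ ≤ 1) (x y : ℕ+ →₀ ℝ) (h : ∀ i, |x i| ≤ |y i|) :
    tnorm θ (Schreier 1) x ≤ tnorm θ (Schreier 1) y :=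
  ciSup_le fun m => (tnormAux_abs_mono h0 h1 m x y h).trans (tnormAux_le h0 h1 m y)

/-- implicit equation, upper bound -/
lemma tnorm_le_of (h0 : 0 < θ) (h1 : θ ≤ 1) (x : ℕ+ →₀ ℝ) (c : ℝ) (hc : ∀ i, |x i| ≤ c)
    (hE : ∀ (d : ℕ) (E : Fin d → Finset ℕ+), TsAdmissible (Schreier 1) E →
      θ * ∑ i, tnorm θ (Schreier 1) (tsProj (E i) x) ≤ c) :
    tnorm θ (Schreier 1) x ≤ c := by
  have hc0 : 0 ≤ c := (abs_nonneg _).trans (hc 1)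
  refine ciSup_le fun m => ?_
  induction m with
  | zero => simp only [tnormAux]; exact ciSup_le hc
  | succ m ih =>
    rw [tnormAux.eq_2]
    refine max_le ih (Real.sSup_le ?_ hc0)
    rintro r ⟨d, E, hE', rfl⟩
    refine le_trans ?_ (hE d E hE')
    exact mul_le_mul_of_nonneg_left (Finset.sum_le_sum fun i _ => tnormAux_le h0 h1 _ _) h0.le

/-- upper bound, with only long families -/
lemma tnorm_le_of_long (h0 : 0 < θ) (h1 : θ ≤ 1) (k : ℕ) (hk : θ * k = 1) (x : ℕ+ →₀ ℝ) (c : ℝ)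
    (hc : ∀ i, |x i| ≤ c)
    (hE : ∀ (d : ℕ) (E : Fin d → Finset ℕ+), TsAdmissible (Schreier 1) E → k + 1 ≤ d →
      θ * ∑ i, tnorm θ (Schreier 1) (tsProj (E i) x) ≤ c) :
    tnorm θ (Schreier 1) x ≤ c := by
  have hc0 : 0 ≤ c := (abs_nonneg _).trans (hc 1)
  refine ciSup_le fun m => ?_
  induction m generalizing x with
  | zero => simp only [tnormAux]; exact ciSup_le hc
  | succ m ih =>
    rw [tnormAux.eq_2]
    refine max_le (ih x hc hE) (Real.sSup_le ?_ hc0)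
    rintro r ⟨d, E, hE', rfl⟩
    by_cases hd : k + 1 ≤ d
    · refine le_trans ?_ (hE d E hE' hd)
      exact mul_le_mul_of_nonneg_left (Finset.sum_le_sum fun i _ => tnormAux_le h0 h1 _ _) h0.le
    · have h3 : ∑ i, tnormAux θ (Schreier 1) m (tsProj (E i) x) ≤ ∑ i : Fin d, c := by
        refine Finset.sum_le_sum fun i _ => ih _ (fun j => (abs_tsProj_le _ _ _).trans (hc j)) ?_
        intro d' E' hE'' hd'
        refine le_trans ?_ (hE d' E' hE'' hd')
        refine mul_le_mul_of_nonneg_left (Finset.sum_le_sum fun j _ => ?_) h0.le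
        rw [tsProj_tsProj]
        exact tnorm_abs_mono h0 h1 _ _ fun l => abs_tsProj_le _ _ _
      simp only [Finset.sum_const, Finset.card_univ, Fintype.card_fin, nsmul_eq_mul] at h3
      have hd2 : (d : ℝ) ≤ k := by exact_mod_cast (by omega : d ≤ k)
      calc _ ≤ θ * (d * c) := mul_le_mul_of_nonneg_left h3 h0.le
        _ ≤ θ * (k * c) := by gcongr
        _ = c := by rw [← mul_assoc, hk, one_mul]

/-- sup / l1 bound -/
lemma tnorm_le_sup_l1 (h0 : 0 < θ) (h1 : θ ≤ 1) (x : ℕ+ →₀ ℝ) (c : ℝ) (hc : ∀ i, |x i| ≤ c)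
    (hl : θ * tsL1 x ≤ c) : tnorm θ (Schreier 1) x ≤ c := by
  refine tnorm_le_of h0 h1 x c hc fun d E hE => le_trans ?_ hl
  rw [ts_adm_iff] at hE
  exact mul_le_mul_of_nonneg_left ((Finset.sum_le_sum fun i _ => tnorm_le_l1 h0 h1 _).trans
    (sum_tsL1_le E hE.2.1 x)) h0.le

/-- lower bound with families indexed by finite sets of naturals, possibly with empty members -/
lemma tnorm_lb' (h0 : 0 < θ) (h1 : θ ≤ 1) (x : ℕ+ →₀ ℝ) (s : Finset ℕ) (E : ℕ → Finset ℕ+)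
    (h2 : ∀ i ∈ s, ∀ j ∈ s, i < j → ∀ a ∈ E i, ∀ b ∈ E j, a < b)
    (h3 : ∀ i ∈ s, ∀ a ∈ E i, s.card ≤ (a : ℕ)) :
    θ * ∑ i ∈ s, tnorm θ (Schreier 1) (tsProj (E i) x) ≤ tnorm θ (Schreier 1) x := by
  classical
  set t := s.filter fun i => (E i).Nonempty with ht
  have hts : t ⊆ s := Finset.filter_subset _ _
  have hsum : ∑ i ∈ s, tnorm θ (Schreier 1) (tsProj (E i) x)
      = ∑ i ∈ t, tnorm θ (Schreier 1) (tsProj (E i) x) := by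
    symm
    refine Finset.sum_subset hts fun i hi hi' => ?_
    have : E i = ∅ := by
      by_contra h
      exact hi' (Finset.mem_filter.2 ⟨hi, Finset.nonempty_iff_ne_empty.2 h⟩)
    apply le_antisymm
    · refine (tnorm_le_l1 h0 h1 _).trans ?_
      have h5 : tsProj (E i) x = 0 := by ext j; simp [tsProj_apply, this]
      simp [tsL1, h5]
    · exact (abs_nonneg _).trans (abs_le_tnorm h0 h1 _ 1)
  rw [hsum]
  let f := t.orderEmbOfFin rfl
  have hft : ∀ i, f i ∈ t := fun i => Finset.orderEmbOfFin_mem t rfl i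
  have hsum2 : ∑ i ∈ t, tnorm θ (Schreier 1) (tsProj (E i) x)
      = ∑ i : Fin t.card, tnorm θ (Schreier 1) (tsProj (E (f i)) x) := by
    have : t = Finset.univ.map f.toEmbedding := by
      ext j; simp only [Finset.mem_map, Finset.mem_univ, true_and]
      have := Finset.range_orderEmbOfFin t (rfl : t.card = t.card)
      constructor
      · intro hj
        have : j ∈ Set.range f := by rw [this]; exact hj
        exact this
      · rintro ⟨i, rfl⟩; exact hft i
    conv_lhs => rw [this]
    rw [Finset.sum_map]; rfl
  rw [hsum2]
  apply tnorm_lb h0 h1 x (fun i => E (f i))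
  rw [ts_adm_iff]
  refine ⟨fun i => (Finset.mem_filter.1 (hft i)).2, fun i j hij => ?_, fun i a ha => ?_⟩
  · exact h2 _ (hts (hft i)) _ (hts (hft j)) (f.strictMono hij)
  · exact (Finset.card_le_card hts).trans (h3 _ (hts (hft i)) a ha)

end TsPart1

section TsPart2

variable {θ : ℝ} {X : Type*} [NormedAddCommGroup X] [NormedSpace ℝ X] {e : ℕ+ → X}

/-- finite sums -/
def tsW (e : ℕ+ → X) (A : Finset ℕ+) (a : ℕ+ → ℝ) : X := ∑ i ∈ A, a i • e i

/-- finitely supported truncation -/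
def tsF (A : Finset ℕ+) (a : ℕ+ → ℝ) : ℕ+ →₀ ℝ :=
  Finsupp.onFinset A (fun i => if i ∈ A then a i else 0) (by intro i; simp; tauto)

lemma tsF_apply (A : Finset ℕ+) (a : ℕ+ → ℝ) (i : ℕ+) :
    tsF A a i = if i ∈ A then a i else 0 := rfl

/-- coordinates -/
def tsC (hX : IsTsirelsonSpace θ 1 X e) (x : X) : ℕ+ → ℝ := (hX.expansion x).choose

lemma tsF_sum (A : Finset ℕ+) (a : ℕ+ → ℝ) :
    ((tsF A a).sum fun i c => c • e i) = tsW e A a := by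
  rw [Finsupp.sum_of_support_subset (s := A)]
  · refine Finset.sum_congr rfl fun i hi => ?_
    simp [tsF_apply, hi]
  · intro i; simp [tsF_apply]; tauto
  · simp

lemma tsL1_tsF (A : Finset ℕ+) (a : ℕ+ → ℝ) : tsL1 (tsF A a) = ∑ i ∈ A, |a i| := by
  rw [tsL1_eq _ (s := A)]
  · refine Finset.sum_congr rfl fun i hi => ?_
    simp [tsF_apply, hi]
  · intro i; simp [tsF_apply]; tauto

lemma tsW_norm (hX : IsTsirelsonSpace θ 1 X e) (A : Finset ℕ+) (a : ℕ+ → ℝ) :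
    ‖tsW e A a‖ = tnorm θ (Schreier 1) (tsF A a) := by
  rw [← hX.norm_embed, tsF_sum]

lemma tnorm_add_le (hX : IsTsirelsonSpace θ 1 X e) (f g : ℕ+ →₀ ℝ) :
    tnorm θ (Schreier 1) (f + g) ≤ tnorm θ (Schreier 1) f + tnorm θ (Schreier 1) g := by
  rw [← hX.norm_embed, ← hX.norm_embed, ← hX.norm_embed, Finsupp.sum_add_index']
  · exact norm_add_le _ _
  · simp
  · intros; rw [add_smul]

lemma tnorm_add_single (h0 : 0 < θ) (h1 : θ ≤ 1) (hX : IsTsirelsonSpace θ 1 X e)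
    (f : ℕ+ →₀ ℝ) (i : ℕ+) (t : ℝ) :
    tnorm θ (Schreier 1) (f + Finsupp.single i t) ≤
      max |f i + t| (tnorm θ (Schreier 1) f + θ * |t|) := by
  apply tnorm_le_of h0 h1
  · intro j
    by_cases hj : j = i
    · subst hj; simp
    · apply le_max_of_le_right
      have : (f + Finsupp.single i t) j = f j := by simp [Ne.symm hj]
      rw [this]
      have := abs_le_tnorm h0 h1 f j
      have := mul_nonneg h0.le (abs_nonneg t)
      linarith
  · intro d E hE
    apply le_max_of_le_right
    have h3 : ∑ l, tnorm θ (Schreier 1) (tsProj (E l) (f + Finsupp.single i t)) ≤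
        ∑ l, tnorm θ (Schreier 1) (tsProj (E l) f) + ∑ l, tsL1 (tsProj (E l) (Finsupp.single i t)) := by
      rw [← Finset.sum_add_distrib]
      refine Finset.sum_le_sum fun l _ => ?_
      rw [tsProj_add]
      exact (tnorm_add_le hX _ _).trans (add_le_add le_rfl (tnorm_le_l1 h0 h1 _))
    have h4 := sum_tsL1_le E ((ts_adm_iff E).1 hE).2.1 (Finsupp.single i t)
    have h5 : tsL1 (Finsupp.single i t) = |t| := by simp [tsL1]
    have h6 := tnorm_lb h0 h1 f E hE
    rw [h5] at h4
    have h7 := mul_le_mul_of_nonneg_left (h3.trans (add_le_add le_rfl h4)) h0.le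
    linarith

lemma tsC_hasSum (hX : IsTsirelsonSpace θ 1 X e) (x : X) :
    HasSum (fun i => tsC hX x i • e i) x := (hX.expansion x).choose_spec.1

lemma tsC_unique (hX : IsTsirelsonSpace θ 1 X e) {x : X} {a : ℕ+ → ℝ}
    (h : HasSum (fun i => a i • e i) x) : tsC hX x = a :=
  (hX.expansion x).unique (tsC_hasSum hX x) h

lemma tsC_add (hX : IsTsirelsonSpace θ 1 X e) (x y : X) (i : ℕ+) :
    tsC hX (x + y) i = tsC hX x i + tsC hX y i := by
  have : tsC hX (x + y) = fun i => tsC hX x i + tsC hX y i := by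
    apply tsC_unique
    simp only [add_smul]
    exact (tsC_hasSum hX x).add (tsC_hasSum hX y)
  rw [this]

lemma tsC_smul (hX : IsTsirelsonSpace θ 1 X e) (t : ℝ) (x : X) (i : ℕ+) :
    tsC hX (t • x) i = t * tsC hX x i := by
  have : tsC hX (t • x) = fun i => t * tsC hX x i := by
    apply tsC_unique
    simp only [mul_smul]
    exact (tsC_hasSum hX x).const_smul t
  rw [this]

lemma tsC_neg (hX : IsTsirelsonSpace θ 1 X e) (x : X) (i : ℕ+) :
    tsC hX (-x) i = - tsC hX x i := by
  rw [← neg_one_smul ℝ x, tsC_smul]; ring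

lemma tsC_sub (hX : IsTsirelsonSpace θ 1 X e) (x y : X) (i : ℕ+) :
    tsC hX (x - y) i = tsC hX x i - tsC hX y i := by
  rw [sub_eq_add_neg, tsC_add, tsC_neg]; ring

lemma tsC_W (hX : IsTsirelsonSpace θ 1 X e) (A : Finset ℕ+) (a : ℕ+ → ℝ) (i : ℕ+) :
    tsC hX (tsW e A a) i = if i ∈ A then a i else 0 := by
  have : tsC hX (tsW e A a) = fun i => if i ∈ A then a i else 0 := by
    apply tsC_unique
    have h : tsW e A a = ∑ i ∈ A, (if i ∈ A then a i else 0) • e i :=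
      Finset.sum_congr rfl fun i hi => by simp [hi]
    rw [h]
    apply hasSum_sum_of_ne_finset_zero
    intro i hi; simp [hi]
  rw [this]

lemma tsC_e (hX : IsTsirelsonSpace θ 1 X e) (i j : ℕ+) :
    tsC hX (e i) j = if j = i then 1 else 0 := by
  have : e i = tsW e {i} (fun _ => 1) := by simp [tsW]
  rw [this, tsC_W]; simp

lemma tsC_ext (hX : IsTsirelsonSpace θ 1 X e) {x y : X} (h : ∀ i, tsC hX x i = tsC hX y i) :
    x = y := by
  have h1 := tsC_hasSum hX x
  have h2 := tsC_hasSum hX y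
  rw [← funext h] at h2
  exact h1.unique h2

lemma tsW_tendsto (hX : IsTsirelsonSpace θ 1 X e) (x : X) :
    Filter.Tendsto (fun A => tsW e A (tsC hX x)) Filter.atTop (nhds x) := tsC_hasSum hX x

lemma tsW_mono (h0 : 0 < θ) (h1 : θ ≤ 1) (hX : IsTsirelsonSpace θ 1 X e) {A B : Finset ℕ+}
    {a b : ℕ+ → ℝ} (hAB : A ⊆ B) (h : ∀ i ∈ A, |a i| ≤ |b i|) :
    ‖tsW e A a‖ ≤ ‖tsW e B b‖ := by
  rw [tsW_norm hX, tsW_norm hX]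
  apply tnorm_abs_mono h0 h1
  intro i
  rw [tsF_apply, tsF_apply]
  by_cases hi : i ∈ A
  · simp [hi, hAB hi, h i hi]
  · simp [hi]

lemma tsW_le (h0 : 0 < θ) (h1 : θ ≤ 1) (hX : IsTsirelsonSpace θ 1 X e) {A : Finset ℕ+}
    {a : ℕ+ → ℝ} (x : X) (h : ∀ i ∈ A, |a i| ≤ |tsC hX x i|) : ‖tsW e A a‖ ≤ ‖x‖ := by
  refine ge_of_tendsto (tsW_tendsto hX x).norm ?_
  filter_upwards [Filter.eventually_ge_atTop A] with B hB
  exact tsW_mono h0 h1 hX hB h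

lemma ts_mono (h0 : 0 < θ) (h1 : θ ≤ 1) (hX : IsTsirelsonSpace θ 1 X e) (x y : X)
    (h : ∀ i, |tsC hX x i| ≤ |tsC hX y i|) : ‖x‖ ≤ ‖y‖ :=
  le_of_tendsto' (tsW_tendsto hX x).norm fun _ => tsW_le h0 h1 hX y fun i _ => h i

lemma tsW_abs_le (h0 : 0 < θ) (h1 : θ ≤ 1) (hX : IsTsirelsonSpace θ 1 X e) (A : Finset ℕ+)
    (a : ℕ+ → ℝ) (i : ℕ+) (hi : i ∈ A) : |a i| ≤ ‖tsW e A a‖ := by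
  rw [tsW_norm hX]
  have := abs_le_tnorm h0 h1 (tsF A a) i
  rwa [tsF_apply, if_pos hi] at this

lemma ts_abs_le (h0 : 0 < θ) (h1 : θ ≤ 1) (hX : IsTsirelsonSpace θ 1 X e) (x : X) (i : ℕ+) :
    |tsC hX x i| ≤ ‖x‖ :=
  (tsW_abs_le h0 h1 hX {i} _ i (by simp)).trans (tsW_le h0 h1 hX x fun _ _ => le_rfl)

lemma tsW_le_sup_l1 (h0 : 0 < θ) (h1 : θ ≤ 1) (hX : IsTsirelsonSpace θ 1 X e) (A : Finset ℕ+)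
    (a : ℕ+ → ℝ) (c : ℝ) (hc0 : 0 ≤ c) (hc : ∀ i ∈ A, |a i| ≤ c) (hl : θ * ∑ i ∈ A, |a i| ≤ c) :
    ‖tsW e A a‖ ≤ c := by
  rw [tsW_norm hX]
  apply tnorm_le_sup_l1 h0 h1
  · intro i; rw [tsF_apply]; split_ifs with h
    · exact hc i h
    · simpa using hc0
  · rwa [tsL1_tsF]

lemma ts_norm_e (h0 : 0 < θ) (h1 : θ ≤ 1) (hX : IsTsirelsonSpace θ 1 X e) (i : ℕ+) :
    ‖e i‖ = 1 := by
  have : e i = tsW e {i} (fun _ => 1) := by simp [tsW]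
  apply le_antisymm
  · rw [this]
    apply tsW_le_sup_l1 h0 h1 hX <;> simp [h1]
  · have := ts_abs_le h0 h1 hX (e i) i
    simpa [tsC_e] using this

lemma ts_norm_pair (h0 : 0 < θ) (h2 : θ ≤ 1/2) (hX : IsTsirelsonSpace θ 1 X e) (i j : ℕ+)
    (hij : i ≠ j) (s t : ℝ) (hs : |s| = 1) (ht : |t| = 1) : ‖s • e i + t • e j‖ = 1 := by
  have h1 : θ ≤ 1 := by linarith
  have : s • e i + t • e j = tsW e {i, j} (fun l => if l = i then s else t) := by
    simp [tsW, Finset.sum_pair hij, hij.symm]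
  apply le_antisymm
  · rw [this]
    apply tsW_le_sup_l1 h0 h1 hX _ _ _ zero_le_one
    · intro l _
      split_ifs <;> simp [hs, ht]
    · rw [Finset.sum_pair hij]
      simp [hij.symm, hs, ht]; linarith
  · have := ts_abs_le h0 h1 hX (s • e i + t • e j) i
    simpa [tsC_e, tsC_add, tsC_smul, hs, hij] using this

lemma ts_add_e (h0 : 0 < θ) (h1 : θ ≤ 1) (hX : IsTsirelsonSpace θ 1 X e) (x : X) (i : ℕ+)
    (t : ℝ) : ‖x + t • e i‖ ≤ max |tsC hX x i + t| (‖x‖ + θ * |t|) := by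
  have hx := tsW_tendsto hX x
  refine le_of_tendsto_of_tendsto (hx.add_const (t • e i)).norm
    (tendsto_const_nhds.max (hx.norm.add_const (θ * |t|))) ?_
  filter_upwards [Filter.eventually_ge_atTop {i}] with A hA
  have hi : i ∈ A := hA (by simp)
  have := tnorm_add_single h0 h1 hX (tsF A (tsC hX x)) i t
  rw [tsF_apply, if_pos hi, ← tsW_norm hX, ← hX.norm_embed, Finsupp.sum_add_index', tsF_sum,
    Finsupp.sum_single_index] at this
  · exact this
  · simp
  · simp
  · intros; rw [add_smul]

lemma tsProj_tsF (A B : Finset ℕ+) (hAB : A ⊆ B) (a : ℕ+ → ℝ) :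
    tsProj A (tsF B a) = tsF A a := by
  ext i
  rw [tsProj_apply, tsF_apply, tsF_apply]
  by_cases hi : i ∈ A
  · simp [hi, hAB hi]
  · simp [hi]

/-- lower bound in `X` -/
lemma tsW_lb (h0 : 0 < θ) (h1 : θ ≤ 1) (hX : IsTsirelsonSpace θ 1 X e) (a : ℕ+ → ℝ) (c : ℝ)
    (hc : ∀ A, ‖tsW e A a‖ ≤ c)
    (s : Finset ℕ) (E : ℕ → Finset ℕ+)
    (h2 : ∀ i ∈ s, ∀ j ∈ s, i < j → ∀ a ∈ E i, ∀ b ∈ E j, a < b)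
    (h3 : ∀ i ∈ s, ∀ a ∈ E i, s.card ≤ (a : ℕ)) :
    θ * ∑ i ∈ s, ‖tsW e (E i) a‖ ≤ c := by
  refine le_trans ?_ (hc (s.biUnion E))
  rw [tsW_norm hX]
  refine le_trans (le_of_eq ?_) (tnorm_lb' h0 h1 _ s E h2 h3)
  congr 1
  refine Finset.sum_congr rfl fun i hi => ?_
  rw [tsW_norm hX, tsProj_tsF]
  exact Finset.subset_biUnion_of_mem E hi

/-- upper bound -/
lemma ts_ub (h0 : 0 < θ) (h1 : θ ≤ 1) (hX : IsTsirelsonSpace θ 1 X e) (k : ℕ) (hk : θ * k = 1)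
    (x : X) (c : ℝ) (hc : ∀ i, |tsC hX x i| ≤ c) (hx : c < ‖x‖) :
    ∃ (d : ℕ) (E : ℕ → Finset ℕ+), k + 1 ≤ d ∧ (∀ i < d, (E i).Nonempty) ∧
      (∀ i < d, ∀ j < d, i < j → ∀ a ∈ E i, ∀ b ∈ E j, a < b) ∧
      (∀ i < d, ∀ a ∈ E i, d ≤ (a : ℕ)) ∧
      c < θ * ∑ i ∈ Finset.range d, ‖tsW e (E i) (tsC hX x)‖ := by
  have hc0 : 0 ≤ c := (abs_nonneg _).trans (hc 1)
  obtain ⟨A, hA⟩ := ((tsW_tendsto hX x).norm.eventually (lt_mem_nhds hx)).exists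
  rw [tsW_norm hX] at hA
  by_contra hcon
  push Not at hcon
  refine absurd (tnorm_le_of_long h0 h1 k hk (tsF A (tsC hX x)) c ?_ ?_) (not_le.2 hA)
  · intro i; rw [tsF_apply]; split_ifs
    · exact hc i
    · simpa using hc0
  · intro d E hE hd
    rw [ts_adm_iff] at hE
    obtain ⟨q1, q2, q3⟩ := hE
    have := hcon d (fun i => if h : i < d then E ⟨i, h⟩ else ∅) hd
      (fun i hi => by simpa [hi] using q1 _)
      (fun i hi j hj hij => by simpa [hi, hj] using q2 ⟨i, hi⟩ ⟨j, hj⟩ hij)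
      (fun i hi => by simpa [hi] using q3 _)
    refine le_trans ?_ this
    rw [Finset.sum_range]
    refine mul_le_mul_of_nonneg_left (Finset.sum_le_sum fun i _ => ?_) h0.le
    simp only [i.2, dif_pos]
    rw [tsW_norm hX]
    apply tnorm_abs_mono h0 h1
    intro j
    rw [tsProj_apply, tsF_apply, tsF_apply]
    split_ifs <;> simp

lemma tsW_add (A : Finset ℕ+) (a b : ℕ+ → ℝ) :
    tsW e A (fun i => a i + b i) = tsW e A a + tsW e A b := by
  simp [tsW, add_smul, Finset.sum_add_distrib]

lemma tsW_sub (A : Finset ℕ+) (a b : ℕ+ → ℝ) :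
    tsW e A (fun i => a i - b i) = tsW e A a - tsW e A b := by
  simp [tsW, sub_smul, Finset.sum_sub_distrib]

lemma tsW_C_add (hX : IsTsirelsonSpace θ 1 X e) (A : Finset ℕ+) (x y : X) :
    tsW e A (tsC hX (x + y)) = tsW e A (tsC hX x) + tsW e A (tsC hX y) := by
  rw [← tsW_add]; congr 1; ext i; exact tsC_add hX x y i

lemma tsW_C_sub (hX : IsTsirelsonSpace θ 1 X e) (A : Finset ℕ+) (x y : X) :
    tsW e A (tsC hX (x - y)) = tsW e A (tsC hX x) - tsW e A (tsC hX y) := by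
  rw [← tsW_sub]; congr 1; ext i; exact tsC_sub hX x y i

lemma tsW_C_le (h0 : 0 < θ) (h1 : θ ≤ 1) (hX : IsTsirelsonSpace θ 1 X e) (A : Finset ℕ+)
    (x : X) : ‖tsW e A (tsC hX x)‖ ≤ ‖x‖ := tsW_le h0 h1 hX x fun _ _ => le_rfl

end TsPart2

section TsPart3

variable {θ : ℝ} {X : Type*} [NormedAddCommGroup X] [NormedSpace ℝ X] {e : ℕ+ → X}

/-- auxiliary sequence -/
def tsSeq (g : ℕ → Finset ℕ+) (D : ℕ) : ℕ → ℕ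
  | 0 => D
  | j + 1 => max (tsSeq g D j) ((g (tsSeq g D j)).sup fun a => (a : ℕ))

/-- bounded completeness -/
lemma ts_bc (h0 : 0 < θ) (h1 : θ ≤ 1) (hX : IsTsirelsonSpace θ 1 X e) (w : ℕ+ → ℝ)
    (hw : ∀ A, ‖tsW e A w‖ ≤ 1) (η : ℝ) (hη : 0 < η) :
    ∃ N : ℕ, ∀ A : Finset ℕ+, (∀ a ∈ A, N < (a : ℕ)) → ‖tsW e A w‖ ≤ η := by
  by_contra hcon
  push Not at hcon
  choose g hg1 hg2 using hcon
  obtain ⟨D, hD⟩ := exists_nat_gt (1 / (θ * η))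
  have hm : Monotone (tsSeq g D) := monotone_nat_of_le_succ fun j => le_max_left _ _
  have h := tsW_lb h0 h1 hX w 1 hw (Finset.range D) (fun j => g (tsSeq g D j)) ?_ ?_
  · have h3 : ∑ j ∈ Finset.range D, η ≤ ∑ j ∈ Finset.range D, ‖tsW e (g (tsSeq g D j)) w‖ :=
      Finset.sum_le_sum fun j _ => (hg2 _).le
    simp only [Finset.sum_const, Finset.card_range, nsmul_eq_mul] at h3
    have h4 := mul_le_mul_of_nonneg_left h3 h0.le
    rw [div_lt_iff₀ (by positivity)] at hD
    nlinarith
  · intro i _ j _ hij a ha b hb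
    have q1 : (a : ℕ) ≤ tsSeq g D (i+1) :=
      le_max_of_le_right (Finset.le_sup (f := fun a : ℕ+ => (a : ℕ)) ha)
    have q2 := hm (Nat.succ_le_of_lt hij)
    have q3 := hg1 _ b hb
    exact (q1.trans q2).trans_lt q3
  · intro i _ a ha
    have q2 := hm (Nat.zero_le i)
    have q3 := hg1 _ a ha
    rw [Finset.card_range]
    exact (q2.trans_lt q3).le

lemma ts_tail (h0 : 0 < θ) (h1 : θ ≤ 1) (hX : IsTsirelsonSpace θ 1 X e) (x : X)
    (δ : ℝ) (hδ : 0 < δ) : ∃ A0 : Finset ℕ+, ‖x - tsW e A0 (tsC hX x)‖ < δ ∧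
      ∀ A, Disjoint A A0 → ‖tsW e A (tsC hX x)‖ < δ := by
  have h := tsW_tendsto hX x
  obtain ⟨A0, hA0⟩ := (h.eventually (Metric.ball_mem_nhds x hδ)).exists
  rw [dist_comm, dist_eq_norm] at hA0
  refine ⟨A0, hA0, fun A hA => lt_of_le_of_lt ?_ hA0⟩
  apply tsW_le h0 h1 hX
  intro i hi
  have : i ∉ A0 := Finset.disjoint_left.1 hA hi
  rw [tsC_sub, tsC_W, if_neg this, sub_zero]

lemma ts_sup_lt (h0 : 0 < θ) (h1 : θ ≤ 1) (hX : IsTsirelsonSpace θ 1 X e) (x : X)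
    (hx : ∀ i, |tsC hX x i| < 1) : ∃ q < 1, ∀ i, |tsC hX x i| ≤ q := by
  obtain ⟨A0, -, hA⟩ := ts_tail h0 h1 hX x (1/2) (by norm_num)
  have : ∀ i ∉ A0, |tsC hX x i| ≤ 1/2 := fun i hi =>
    (tsW_abs_le h0 h1 hX {i} _ i (by simp)).trans (hA {i} (by simpa using hi)).le
  by_cases hne : A0.Nonempty
  · obtain ⟨m, hm, hmax⟩ := A0.exists_max_image (fun i => |tsC hX x i|) hne
    refine ⟨max (1/2) |tsC hX x m|, max_lt (by norm_num) (hx m), fun i => ?_⟩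
    by_cases hi : i ∈ A0
    · exact le_max_of_le_right (hmax i hi)
    · exact le_max_of_le_left (this i hi)
  · rw [Finset.not_nonempty_iff_eq_empty] at hne
    subst hne
    exact ⟨1/2, by norm_num, fun i => this i (by simp)⟩

lemma ts_key (h0 : 0 < θ) (h1 : θ ≤ 1) (hX : IsTsirelsonSpace θ 1 X e) (k : ℕ) (hk2 : 2 ≤ k)
    (hk : θ * k = 1) (v : ℕ → X) (hv : ∀ n, ‖v n‖ = 1)
    (hp : ∀ n m, n ≠ m → ‖v n + v m‖ ≤ 1) (hm : ∀ n m, n ≠ m → ‖v n - v m‖ ≤ 1)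
    (r : ℕ) (hr : ∀ i, |tsC hX (v r) i| < 1) : False := by
  classical
  -- the coordinatewise limit
  have hcomp : IsCompact (Set.univ.pi fun _ : ℕ+ => Set.Icc (-1 : ℝ) 1) :=
    isCompact_univ_pi fun _ => isCompact_Icc
  obtain ⟨w, -, φ, hφ, hlim⟩ := hcomp.tendsto_subseq (x := fun n => tsC hX (v n)) (by
    intro n i _
    have := ts_abs_le h0 h1 hX (v n) i
    rw [hv, abs_le] at this
    exact this)
  rw [tendsto_pi_nhds] at hlim
  have htW : ∀ A, Filter.Tendsto (fun j => tsW e A (tsC hX (v (φ j)))) Filter.atTop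
      (nhds (tsW e A w)) := fun A =>
    tendsto_finsetSum A fun i _ => (hlim i).smul_const (e i)
  have hw : ∀ A, ‖tsW e A w‖ ≤ 1 := fun A => le_of_tendsto' (htW A).norm fun j => by
    rw [← hv (φ j)]; exact tsW_C_le h0 h1 hX A _
  have hne : ∀ n, ∀ᶠ j in Filter.atTop, φ j ≠ n := fun n => by
    filter_upwards [Filter.eventually_gt_atTop n] with j hj
    have := hφ.id_le j
    simp only [id] at this
    omega
  have hpw : ∀ n A, ‖tsW e A (tsC hX (v n)) + tsW e A w‖ ≤ 1 := fun n A => by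
    refine le_of_tendsto ((htW A).const_add (tsW e A (tsC hX (v n)))).norm ?_
    filter_upwards [hne n] with j hj
    rw [← tsW_C_add]
    exact (tsW_C_le h0 h1 hX A _).trans (hp _ _ hj.symm)
  -- constants
  obtain ⟨q, hq1, hq⟩ := ts_sup_lt h0 h1 hX (v r) hr
  have hkR : (2 : ℝ) ≤ k := by exact_mod_cast hk2
  set δ0 : ℝ := 1 / (8 * (k * (k + 1))) with hδ0
  have hδ0p : 0 < δ0 := by positivity
  set δ := min δ0 (1 - q) with hδ
  have hδp : 0 < δ := lt_min hδ0p (by linarith)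
  have hδle : δ ≤ δ0 := min_le_left _ _
  have hδq : δ ≤ 1 - q := min_le_right _ _
  obtain ⟨d, E, hd, hEne, hE2, hE3, hE4⟩ := ts_ub h0 h1 hX k hk (v r) (1 - δ)
    (fun i => (hq i).trans (by linarith)) (by rw [hv]; linarith)
  obtain ⟨N, hN⟩ := ts_bc h0 h1 hX w hw δ hδp
  obtain ⟨A0, -, hA0⟩ := ts_tail h0 h1 hX (v r) δ hδp
  set K : ℕ := max N ((A0 ∪ (Finset.range d).biUnion E).sup fun a => (a : ℕ)) with hK
  set H : Finset ℕ+ := Finset.Icc 1 K.succPNat with hH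
  have hHmem : ∀ a : ℕ+, (a : ℕ) ≤ K → a ∈ H := fun a ha => by
    rw [hH, Finset.mem_Icc]
    refine ⟨one_le, ?_⟩
    rw [← PNat.coe_le_coe, Nat.succPNat_coe]; omega
  have hHA0 : A0 ⊆ H := fun a ha => hHmem a (le_max_of_le_right
    (Finset.le_sup (f := fun a : ℕ+ => (a : ℕ)) (Finset.mem_union_left _ ha)))
  have hHE : ∀ i < d, ∀ a ∈ E i, (a : ℕ) ≤ K := fun i hi a ha => le_max_of_le_right
    (Finset.le_sup (f := fun a : ℕ+ => (a : ℕ)) (Finset.mem_union_right _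
      (Finset.mem_biUnion.2 ⟨i, Finset.mem_range.2 hi, ha⟩)))
  have hHK : ∀ a : ℕ+, a ∉ H → K < (a : ℕ) := fun a ha => by
    by_contra h; exact ha (hHmem a (by omega))
  -- choose n
  obtain ⟨j, hj1, hj2⟩ := ((hne r).and ((htW H).eventually (Metric.ball_mem_nhds _ hδp))).exists
  set y := v (φ j) with hy
  rw [dist_eq_norm] at hj2
  have hevB := (tsW_tendsto hX y).norm.eventually (lt_mem_nhds (a := 1 - δ) (by rw [hv]; linarith))
  obtain ⟨B, hB1, hB2⟩ := (hevB.and (Filter.eventually_ge_atTop H)).exists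
  have hB2' : H ⊆ B := hB2
  set R := B \ H with hR
  have hsplit : ∀ a : ℕ+ → ℝ, tsW e B a = tsW e R a + tsW e H a := fun a =>
    (Finset.sum_sdiff hB2').symm
  have hRK : ∀ a ∈ R, K < (a : ℕ) := fun a ha => hHK a (Finset.mem_sdiff.1 ha).2
  -- far part of y
  have hfar : 1 - 4 * δ ≤ ‖tsW e R (tsC hX y)‖ := by
    have t1 := hpw (φ j) B
    rw [← hy] at t1
    have t2 : 2 * ‖tsW e B (tsC hX y)‖ ≤ ‖tsW e B (tsC hX y) + tsW e B w‖ +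
        ‖tsW e B (tsC hX y) - tsW e B w‖ := by
      have : (2 : ℝ) • tsW e B (tsC hX y) = (tsW e B (tsC hX y) + tsW e B w) +
        (tsW e B (tsC hX y) - tsW e B w) := by rw [two_smul]; abel
      have h := norm_add_le (tsW e B (tsC hX y) + tsW e B w) (tsW e B (tsC hX y) - tsW e B w)
      rw [← this, norm_smul] at h
      simpa using h
    have t3 : ‖tsW e B (tsC hX y) - tsW e B w‖ ≤
        ‖tsW e H (tsC hX y) - tsW e H w‖ + ‖tsW e R (tsC hX y)‖ + ‖tsW e R w‖ := by
      rw [hsplit, hsplit]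
      have : tsW e R (tsC hX y) + tsW e H (tsC hX y) - (tsW e R w + tsW e H w) =
        (tsW e H (tsC hX y) - tsW e H w) + tsW e R (tsC hX y) - tsW e R w := by abel
      rw [this]
      exact (norm_sub_le _ _).trans (add_le_add (norm_add_le _ _) le_rfl)
    have t4 : ‖tsW e R w‖ ≤ δ := hN R fun a ha => (le_max_left _ _).trans_lt (hRK a ha)
    linarith
  have hfar2 : 1 - 5 * δ ≤ ‖tsW e R (tsC hX (v r + y))‖ := by
    have t1 : ‖tsW e R (tsC hX (v r))‖ < δ := hA0 R (Finset.disjoint_left.2 fun a ha ha' =>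
      (Finset.mem_sdiff.1 ha).2 (hHA0 ha'))
    rw [tsW_C_add]
    have := norm_sub_le (tsW e R (tsC hX (v r)) + tsW e R (tsC hX y)) (tsW e R (tsC hX (v r)))
    rw [add_sub_cancel_left] at this
    linarith
  set b : ℕ → ℝ := fun l => ‖tsW e (E l) (tsC hX (v r + y))‖ with hb
  have hplus : ‖v r + y‖ ≤ 1 := hp _ _ hj1.symm
  have hminus : ‖v r - y‖ ≤ 1 := hm _ _ hj1.symm
  have hB : 1 - 2 * δ ≤ θ * ∑ l ∈ Finset.range d, b l := by
    have t1 : θ * ∑ l ∈ Finset.range d, ‖tsW e (E l) (tsC hX (v r - y))‖ ≤ 1 := by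
      apply tsW_lb h0 h1 hX _ _ (fun A => (tsW_C_le h0 h1 hX A _).trans hminus)
      · intro i hi j hj
        exact hE2 i (Finset.mem_range.1 hi) j (Finset.mem_range.1 hj)
      · intro i hi
        rw [Finset.card_range]
        exact hE3 i (Finset.mem_range.1 hi)
    have t2 : ∑ l ∈ Finset.range d, 2 * ‖tsW e (E l) (tsC hX (v r))‖ ≤
        ∑ l ∈ Finset.range d, (b l + ‖tsW e (E l) (tsC hX (v r - y))‖) := by
      refine Finset.sum_le_sum fun l _ => ?_
      simp only [hb]
      rw [tsW_C_add, tsW_C_sub]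
      have h := norm_add_le (tsW e (E l) (tsC hX (v r)) + tsW e (E l) (tsC hX y))
        (tsW e (E l) (tsC hX (v r)) - tsW e (E l) (tsC hX y))
      have e1 : (tsW e (E l) (tsC hX (v r)) + tsW e (E l) (tsC hX y)) +
        (tsW e (E l) (tsC hX (v r)) - tsW e (E l) (tsC hX y)) =
          (2 : ℝ) • tsW e (E l) (tsC hX (v r)) := by rw [two_smul]; abel
      rw [e1, norm_smul] at h
      simpa using h
    rw [← Finset.mul_sum, Finset.sum_add_distrib] at t2
    have t3 := mul_le_mul_of_nonneg_left t2 h0.le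
    linarith
  -- drop one and add the far set
  have hdrop : ∀ l < d, θ * ((∑ j ∈ Finset.range d, b j) - b l + (1 - 5 * δ)) ≤ 1 := by
    intro l hl
    have hlm : l ∈ Finset.range d := Finset.mem_range.2 hl
    set E' : ℕ → Finset ℕ+ := fun i => if i = d then R else E i with hE'
    set s : Finset ℕ := insert d ((Finset.range d).erase l) with hs
    have hdn : d ∉ (Finset.range d).erase l := by simp
    have hcard : s.card = d := by
      rw [hs, Finset.card_insert_of_notMem hdn, Finset.card_erase_of_mem hlm, Finset.card_range]
      omega
    have t1 : θ * ∑ i ∈ s, ‖tsW e (E' i) (tsC hX (v r + y))‖ ≤ 1 := by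
      apply tsW_lb h0 h1 hX _ _ (fun A => (tsW_C_le h0 h1 hX A _).trans hplus)
      · intro i hi j hj hij a ha b hb
        have hi' : i = d ∨ i < d := by simp [hs] at hi; tauto
        have hj' : j = d ∨ j < d := by simp [hs] at hj; tauto
        have hid : i < d := by omega
        simp only [hE', hid.ne, if_false] at ha
        rcases hj' with rfl | hjd
        · simp only [hE', if_true] at hb
          have := hHE i hid a ha
          have := hRK b hb
          rw [← PNat.coe_lt_coe]; omega
        · simp only [hE', hjd.ne, if_false] at hb
          exact hE2 i hid j hjd hij a ha b hb
      · intro i hi a ha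
        rw [hcard]
        have hi' : i = d ∨ i < d := by simp [hs] at hi; tauto
        rcases hi' with rfl | hid
        · simp only [hE', if_true] at ha
          have q1 := hRK a ha
          obtain ⟨c, hc⟩ := hEne l hl
          have q2 := hHE l hl c hc
          have q3 := hE3 l hl c hc
          omega
        · simp only [hE', hid.ne, if_false] at ha
          exact hE3 i hid a ha
    rw [hs, Finset.sum_insert hdn] at t1
    have t2 : ∑ i ∈ (Finset.range d).erase l, ‖tsW e (E' i) (tsC hX (v r + y))‖ =
        ∑ i ∈ (Finset.range d).erase l, b i := by
      refine Finset.sum_congr rfl fun i hi => ?_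
      have : i ≠ d := by rintro rfl; exact hdn hi
      simp [hE', this, hb]
    have t3 := Finset.add_sum_erase (Finset.range d) b hlm
    rw [t2] at t1
    simp only [hE', if_true] at t1
    refine le_trans (mul_le_mul_of_nonneg_left ?_ h0.le) t1
    linarith
  have hsumd := Finset.sum_le_sum fun l hl => hdrop l (Finset.mem_range.1 hl)
  simp only [mul_add, mul_sub, Finset.sum_add_distrib, Finset.sum_sub_distrib, Finset.sum_const,
    Finset.card_range, nsmul_eq_mul] at hsumd
  rw [← Finset.mul_sum] at hsumd
  set S := θ * ∑ l ∈ Finset.range d, b l with hS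
  have hdR : (k : ℝ) + 1 ≤ d := by exact_mod_cast hd
  have hδk : δ * (8 * (k * (k + 1))) ≤ 1 := by
    have := mul_le_mul_of_nonneg_right hδle (by positivity : (0:ℝ) ≤ 8 * (k * (k+1)))
    rwa [hδ0, one_div, inv_mul_cancel₀ (by positivity)] at this
  have hθ : θ = 1 / k := by field_simp; linarith
  -- (d-1) S + d θ (1-5δ) ≤ d
  have f1 : (d - 1) * (1 - 2 * δ) + d * (θ * (1 - 5 * δ)) ≤ d := by nlinarith
  have f2 : d * (θ * (1 - 5 * δ) - 2 * δ) ≤ 1 := by nlinarith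
  have hkδ : (k : ℝ) * (θ * (1 - 5 * δ) - 2 * δ) = 1 - 5 * δ - 2 * δ * k := by
    linear_combination (1 - 5 * δ) * hk
  have hpos : 0 < θ * (1 - 5 * δ) - 2 * δ := by
    have : 0 < (k : ℝ) * (θ * (1 - 5 * δ) - 2 * δ) := by rw [hkδ]; nlinarith
    exact (mul_pos_iff_of_pos_left (by linarith)).1 this
  have f3 : ((k : ℝ) + 1) * (θ * (1 - 5 * δ) - 2 * δ) ≤ 1 :=
    (mul_le_mul_of_nonneg_right hdR hpos.le).trans f2
  have f4 : ((k : ℝ) + 1) * (1 - 5 * δ - 2 * δ * k) ≤ k := by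
    rw [← hkδ]; nlinarith
  nlinarith

end TsPart3

section TsPart4

variable {θ : ℝ} {X : Type*} [NormedAddCommGroup X] [NormedSpace ℝ X] {e : ℕ+ → X}

/-- mutually inverse sphere isometries -/
structure TsIso (u v : X → X) : Prop where
  un : ∀ x, ‖x‖ = 1 → ‖u x‖ = 1
  vn : ∀ x, ‖x‖ = 1 → ‖v x‖ = 1
  vu : ∀ x, ‖x‖ = 1 → v (u x) = x
  uv : ∀ x, ‖x‖ = 1 → u (v x) = x
  iso : ∀ x y, ‖x‖ = 1 → ‖y‖ = 1 → ‖u x - u y‖ = ‖x - y‖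

lemma TsIso.flip {X : Type*} [NormedAddCommGroup X] {u v : X → X} (h : TsIso u v) : TsIso v u where
  un := h.vn
  vn := h.un
  vu := h.uv
  uv := h.vu
  iso x y hx hy := by
    rw [← h.iso _ _ (h.vn x hx) (h.vn y hy), h.uv x hx, h.uv y hy]

lemma ts_pm {σ : ℝ} (h : |σ| = 1) : σ = 1 ∨ σ = -1 := by
  rcases abs_eq (zero_le_one) |>.1 h with h | h <;> simp [h]

lemma ts_factA (h0 : 0 < θ) (h2 : θ ≤ 1/2) (hX : IsTsirelsonSpace θ 1 X e) (y : X) (hy : ‖y‖ = 1)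
    (i : ℕ+) (σ : ℝ) (hσ : |σ| = 1) : ‖y + σ • e i‖ = 2 ↔ tsC hX y i = σ := by
  have h1 : θ ≤ 1 := by linarith
  have hyi := ts_abs_le h0 h1 hX y i
  rw [hy] at hyi
  constructor
  · intro h
    have := ts_add_e h0 h1 hX y i σ
    rw [h, hy, hσ] at this
    rcases le_max_iff.1 this with h | h
    · rw [abs_le] at hyi
      rcases ts_pm hσ with rfl | rfl
      · rcases le_abs.1 h with h | h <;> linarith
      · rcases le_abs.1 h with h | h <;> linarith
    · linarith
  · intro h
    apply le_antisymm
    · refine (norm_add_le _ _).trans ?_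
      rw [norm_smul, ts_norm_e h0 h1 hX, hy, Real.norm_eq_abs, hσ]; norm_num
    · have := ts_abs_le h0 h1 hX (y + σ • e i) i
      rw [tsC_add, tsC_smul, tsC_e, if_pos rfl, h] at this
      refine le_trans (le_of_eq ?_) this
      rcases ts_pm hσ with rfl | rfl <;> norm_num

lemma ts_ball (h0 : 0 < θ) (h1 : θ ≤ 1) (hX : IsTsirelsonSpace θ 1 X e) (y : X) (hy : ‖y‖ = 1)
    (i : ℕ+) : ‖y - tsC hX y i • e i‖ ≤ 1 := by
  rw [← hy]
  apply ts_mono h0 h1 hX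
  intro j
  rw [tsC_sub, tsC_smul, tsC_e]
  split_ifs with h
  · subst h; simp
  · simp

lemma ts_center (h0 : 0 < θ) (h2 : θ ≤ 1/2) (hX : IsTsirelsonSpace θ 1 X e) (z : X)
    (i : ℕ+) (σ : ℝ) (hσ : |σ| = 1) (hz : tsC hX z i = σ)
    (h : ∀ y, ‖y‖ = 1 → tsC hX y i = σ → ‖y - z‖ ≤ 1) : z = σ • e i := by
  have h1 : θ ≤ 1 := by linarith
  apply tsC_ext hX
  intro m
  rw [tsC_smul, tsC_e]
  by_cases hm : m = i
  · subst hm; simp [hz]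
  · rw [if_neg hm, mul_zero]
    have key : ∀ t : ℝ, |t| = 1 → |t - tsC hX z m| ≤ 1 := by
      intro t ht
      have := h (σ • e i + t • e m) (ts_norm_pair h0 h2 hX i m (Ne.symm hm) σ t hσ ht) (by
        rw [tsC_add, tsC_smul, tsC_smul, tsC_e, tsC_e, if_pos rfl, if_neg (Ne.symm hm)]; ring)
      have h3 := (ts_abs_le h0 h1 hX _ m).trans this
      rw [tsC_sub, tsC_add, tsC_smul, tsC_smul, tsC_e, tsC_e, if_pos rfl, if_neg hm] at h3
      simpa using h3
    have k1 := key 1 (by simp)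
    have k2 := key (-1) (by simp)
    rw [abs_le] at k1 k2
    linarith [k1.2, k2.1]

lemma ts_norm_neg_e (h0 : 0 < θ) (h1 : θ ≤ 1) (hX : IsTsirelsonSpace θ 1 X e) (i : ℕ+) :
    ‖-e i‖ = 1 := by rw [norm_neg, ts_norm_e h0 h1 hX]

lemma ts_two {x : X} (hx : ‖x‖ = 1) : ‖-x - x‖ = 2 := by
  have : -x - x = (-2 : ℝ) • x := by rw [neg_smul, two_smul]; abel
  rw [this, norm_smul, hx]; norm_num

lemma ts_antip (h0 : 0 < θ) (h2 : θ ≤ 1/2) (hX : IsTsirelsonSpace θ 1 X e) {u v : X → X}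
    (H : TsIso u v) (i : ℕ+) : u (-e i) = - u (e i) := by
  have h1 : θ ≤ 1 := by linarith
  have he := ts_norm_e h0 h1 hX i
  have he' := ts_norm_neg_e h0 h1 hX i
  set x := u (e i) with hx
  set x' := u (-e i) with hx'
  have nx : ‖x‖ = 1 := H.un _ he
  have nx' : ‖x'‖ = 1 := H.un _ he'
  have hG : ∀ y, ‖y‖ = 1 → (‖y - x'‖ = 2 ↔ tsC hX (v y) i = 1) := by
    intro y hy
    rw [← ts_factA h0 h2 hX (v y) (H.vn y hy) i 1 (by simp), one_smul]
    have := H.iso (v y) (-e i) (H.vn y hy) he'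
    rw [H.uv y hy, sub_neg_eq_add] at this
    rw [← this]
  have hG' : ∀ y, ‖y‖ = 1 → (‖y - x‖ = 2 ↔ tsC hX (v y) i = -1) := by
    intro y hy
    rw [← ts_factA h0 h2 hX (v y) (H.vn y hy) i (-1) (by simp), neg_one_smul]
    have := H.iso (v y) (e i) (H.vn y hy) he
    rw [H.uv y hy, sub_eq_add_neg (v y)] at this
    rw [← this]
  have hGG : ∀ y z, ‖y‖ = 1 → ‖z‖ = 1 → ‖y - x'‖ = 2 → ‖z - x‖ = 2 → ‖y - z‖ = 2 := by
    intro y z hy hz h3 h4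
    rw [hG y hy] at h3
    rw [hG' z hz] at h4
    apply le_antisymm
    · refine (norm_sub_le _ _).trans ?_
      rw [hy, hz]; norm_num
    · rw [← H.flip.iso y z hy hz]
      have := ts_abs_le h0 h1 hX (v y - v z) i
      rw [tsC_sub, h3, h4] at this
      norm_num at this
      exact this
  have hb : ∀ y, ‖y‖ = 1 → ‖y - x‖ = 2 → ‖y - -x‖ ≤ 1 := by
    intro y hy h3
    have hy' : ‖-y‖ = 1 := by rwa [norm_neg]
    have h4 : ‖-y - x'‖ = 2 := by
      have := hGG (-x') y (by rwa [norm_neg]) hy (ts_two nx') h3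
      rw [← this]; congr 1; abel
    have h5 := (hG _ hy').1 h4
    have h6 := ts_ball h0 h1 hX _ (H.vn _ hy') i
    rw [h5, one_smul, ← H.iso _ _ (H.vn _ hy') he, H.uv _ hy', ← hx] at h6
    have : y - -x = -(-y - x) := by abel
    rw [this, norm_neg]; exact h6
  have nnx : ‖-x‖ = 1 := by rwa [norm_neg]
  have hz := ts_center h0 h2 hX (v (-x)) i (-1) (by simp) ((hG' _ nnx).1 (ts_two nx)) (by
    intro w hw hwi
    rw [← H.iso _ _ hw (H.vn _ nnx), H.uv _ nnx]
    apply hb _ (H.un _ hw)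
    rw [hG' _ (H.un _ hw), H.vu _ hw, hwi])
  rw [neg_one_smul] at hz
  rw [hx', ← hz, H.uv _ nnx]

lemma ts_antip' (h0 : 0 < θ) (h2 : θ ≤ 1/2) (hX : IsTsirelsonSpace θ 1 X e) {u v : X → X}
    (H : TsIso u v) (i : ℕ+) (σ : ℝ) (hσ : |σ| = 1) : u (σ • e i) = σ • u (e i) := by
  rcases ts_pm hσ with rfl | rfl
  · simp
  · rw [neg_one_smul, neg_one_smul, ts_antip h0 h2 hX H]

lemma ts_axis (h0 : 0 < θ) (h2 : θ ≤ 1/2) (hX : IsTsirelsonSpace θ 1 X e) {u v : X → X}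
    (H : TsIso u v) (i j : ℕ+) (σ : ℝ) (hσ : |σ| = 1) (h : tsC hX (u (e i)) j = σ) :
    u (e i) = σ • e j := by
  have h1 : θ ≤ 1 := by linarith
  have he := ts_norm_e h0 h1 hX i
  have he' := ts_norm_neg_e h0 h1 hX i
  apply ts_center h0 h2 hX _ _ _ hσ h
  intro y hy hyj
  have h3 : ‖y + u (e i)‖ = 2 := by
    apply le_antisymm
    · refine (norm_add_le _ _).trans ?_
      rw [hy, H.un _ he]; norm_num
    · have := ts_abs_le h0 h1 hX (y + u (e i)) j
      rw [tsC_add, h, hyj] at this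
      refine le_trans (le_of_eq ?_) this
      rcases ts_pm hσ with rfl | rfl <;> norm_num
  have h4 : ‖v y + (1:ℝ) • e i‖ = 2 := by
    have := H.iso (v y) (-e i) (H.vn y hy) he'
    rw [H.uv y hy, ts_antip h0 h2 hX H, sub_neg_eq_add, sub_neg_eq_add] at this
    rw [one_smul, ← this, h3]
  rw [ts_factA h0 h2 hX _ (H.vn y hy) i 1 (by simp)] at h4
  have h6 := ts_ball h0 h1 hX _ (H.vn _ hy) i
  rw [h4, one_smul, ← H.iso _ _ (H.vn _ hy) he, H.uv _ hy] at h6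
  exact h6

lemma ts_exists_axis (h0 : 0 < θ) (hX : IsTsirelsonSpace θ 1 X e)
    (k : ℕ) (hk2 : 2 ≤ k) (hk : θ * k = 1) (h2 : θ ≤ 1/2) {u v : X → X}
    (H : TsIso u v) (i : ℕ+) : ∃ (σ : ℝ) (j : ℕ+), |σ| = 1 ∧ u (e i) = σ • e j := by
  have h1 : θ ≤ 1 := by linarith
  by_cases hj : ∃ j, |tsC hX (u (e i)) j| = 1
  · obtain ⟨j, hj⟩ := hj
    exact ⟨_, j, hj, ts_axis h0 h2 hX H i j _ hj rfl⟩
  · push Not at hj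
    exfalso
    have he := ts_norm_e h0 h1 hX
    have hinj : ∀ n m : ℕ, n ≠ m → n.succPNat ≠ m.succPNat := fun n m h h' =>
      h (Nat.succPNat_injective h')
    apply ts_key h0 h1 hX k hk2 hk (fun n => u (e n.succPNat)) (fun n => H.un _ (he _)) ?_ ?_
      i.natPred
    · intro j
      have hj' := ts_abs_le h0 h1 hX (u (e i)) j
      rw [H.un _ (he i)] at hj'
      simp only [PNat.succPNat_natPred]
      exact lt_of_le_of_ne hj' (hj j)
    · intro n m hnm
      have := H.iso (e n.succPNat) (-e m.succPNat) (he _) (ts_norm_neg_e h0 h1 hX _)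
      rw [ts_antip h0 h2 hX H, sub_neg_eq_add, sub_neg_eq_add] at this
      simp only [this]
      have := ts_norm_pair h0 h2 hX _ _ (hinj n m hnm) 1 1 (by simp) (by simp)
      simp only [one_smul] at this
      exact this.le
    · intro n m hnm
      simp only [H.iso (e n.succPNat) (e m.succPNat) (he _) (he _)]
      have := ts_norm_pair h0 h2 hX _ _ (hinj n m hnm) 1 (-1) (by simp) (by simp)
      simp only [one_smul, neg_one_smul, ← sub_eq_add_neg] at this
      exact this.le

lemma ts_axis_flip (h0 : 0 < θ) (h2 : θ ≤ 1/2) (hX : IsTsirelsonSpace θ 1 X e) {u v : X → X}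
    (H : TsIso u v) (i j : ℕ+) (σ : ℝ) (hσ : |σ| = 1) (h : u (e i) = σ • e j) :
    v (e j) = σ • e i := by
  have h1 : θ ≤ 1 := by linarith
  have h3 := H.vu (e i) (ts_norm_e h0 h1 hX i)
  rw [h, ts_antip' h0 h2 hX H.flip j σ hσ] at h3
  rw [← h3, smul_smul]
  rcases ts_pm hσ with rfl | rfl <;> simp

lemma ts_coord_ineq (h0 : 0 < θ) (h2 : θ ≤ 1/2) (hX : IsTsirelsonSpace θ 1 X e) {u v : X → X}
    (H : TsIso u v) (i j : ℕ+) (ε : ℝ) (hε : |ε| = 1) (h : u (e i) = ε • e j) (x : X)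
    (hx : ‖x‖ = 1) (σ : ℝ) (hσ : |σ| = 1) :
    |ε * tsC hX (u x) j + σ| ≤ max |tsC hX x i + σ| (θ + θ * |tsC hX x i + σ|) := by
  have h1 : θ ≤ 1 := by linarith
  set a := tsC hX x i with ha
  set p := x - a • e i with hp
  have np : ‖p‖ ≤ 1 := ts_ball h0 h1 hX x hx i
  have hpi : tsC hX p i = 0 := by rw [hp, tsC_sub, tsC_smul, tsC_e, if_pos rfl, ← ha]; ring
  set w := (1 - θ) • p + (-σ) • e i with hw
  have hwi : tsC hX w i = -σ := by
    rw [hw, tsC_add, tsC_smul, tsC_smul, tsC_e, if_pos rfl, hpi]; ring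
  have hσ' : |-σ| = 1 := by rwa [abs_neg]
  have nw : ‖w‖ = 1 := by
    apply le_antisymm
    · refine (ts_add_e h0 h1 hX _ i (-σ)).trans (max_le ?_ ?_)
      · rw [tsC_smul, hpi, mul_zero, zero_add, hσ']
      · rw [hσ', norm_smul, Real.norm_eq_abs, abs_of_nonneg (by linarith)]
        nlinarith
    · have := ts_abs_le h0 h1 hX w i
      rwa [hwi, hσ'] at this
  have hxw : ‖x - w‖ ≤ max |a + σ| (θ + θ * |a + σ|) := by
    have : x - w = θ • p + (a + σ) • e i := by
      rw [hw, hp]; module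
    rw [this]
    refine (ts_add_e h0 h1 hX _ i _).trans (max_le_max ?_ ?_)
    · rw [tsC_smul, hpi, mul_zero, zero_add]
    · rw [norm_smul, Real.norm_eq_abs, abs_of_pos h0]
      nlinarith
  have nse : ‖σ • e i‖ = 1 := by rw [norm_smul, ts_norm_e h0 h1 hX, Real.norm_eq_abs, hσ, one_mul]
  have huw : tsC hX (u w) j = -(σ * ε) := by
    rw [← ts_factA h0 h2 hX (u w) (H.un w nw) j _ (by rw [abs_neg, abs_mul, hσ, hε, one_mul])]
    have h3 := H.iso w (σ • e i) nw nse
    rw [ts_antip' h0 h2 hX H i σ hσ, h, smul_smul] at h3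
    rw [neg_smul, ← sub_eq_add_neg, h3, sub_eq_add_neg, ← neg_smul,
      ts_factA h0 h2 hX w nw i _ hσ', hwi]
  have h4 := ts_abs_le h0 h1 hX (u x - u w) j
  rw [H.iso x w hx nw, tsC_sub, huw] at h4
  refine le_trans (le_of_eq ?_) (h4.trans hxw)
  rcases ts_pm hε with rfl | rfl
  · congr 1; ring
  · rw [← abs_neg]; congr 1; ring

lemma ts_coord_half (h0 : 0 < θ) (h2 : θ ≤ 1/2) (hX : IsTsirelsonSpace θ 1 X e) {u v : X → X}
    (H : TsIso u v) (i j : ℕ+) (ε : ℝ) (hε : |ε| = 1) (h : u (e i) = ε • e j) (x : X)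
    (hx : ‖x‖ = 1) : 
    (0 ≤ tsC hX x i → 0 ≤ ε * tsC hX (u x) j ∧ ε * tsC hX (u x) j ≤ tsC hX x i) ∧
    (tsC hX x i ≤ 0 → ε * tsC hX (u x) j ≤ 0 ∧ tsC hX x i ≤ ε * tsC hX (u x) j) := by
  have h1 : θ ≤ 1 := by linarith
  have A := ts_coord_ineq h0 h2 hX H i j ε hε h x hx 1 (by simp)
  have B := ts_coord_ineq h0 h2 hX H i j ε hε h x hx (-1) (by simp)
  set a := tsC hX x i
  set b := ε * tsC hX (u x) j
  have ha := ts_abs_le h0 h1 hX x i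
  rw [hx, abs_le] at ha
  rw [abs_of_nonneg (by linarith : 0 ≤ a + 1)] at A
  rw [abs_of_nonpos (by linarith : a + -1 ≤ 0)] at B
  have A' := (le_abs_self _).trans A
  have B' := (neg_le_abs _).trans B
  rw [le_max_iff] at A' B'
  constructor
  · intro h3
    constructor
    · rcases B' with B' | B'
      · linarith
      · nlinarith
    · rcases A' with A' | A'
      · linarith
      · nlinarith
  · intro h3
    constructor
    · rcases A' with A' | A'
      · linarith
      · nlinarith
    · rcases B' with B' | B'
      · linarith
      · nlinarith

lemma ts_coord (h0 : 0 < θ) (h2 : θ ≤ 1/2) (hX : IsTsirelsonSpace θ 1 X e) {u v : X → X}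
    (H : TsIso u v) (i j : ℕ+) (ε : ℝ) (hε : |ε| = 1) (h : u (e i) = ε • e j) (x : X)
    (hx : ‖x‖ = 1) : tsC hX (u x) j = ε * tsC hX x i := by
  have h3 := ts_coord_half h0 h2 hX H i j ε hε h x hx
  have h4 := ts_coord_half h0 h2 hX H.flip j i ε hε
    (ts_axis_flip h0 h2 hX H i j ε hε h) (u x) (H.un x hx)
  rw [H.vu x hx] at h4
  generalize tsC hX x i = a at *
  generalize tsC hX (u x) j = b at *
  obtain ⟨p1, p2⟩ := h3
  obtain ⟨q1, q2⟩ := h4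
  rcases ts_pm hε with rfl | rfl <;> rcases le_total 0 a with ha | ha <;>
    rcases le_total 0 b with hb | hb
  · linarith [p1 ha, q1 hb]
  · linarith [p1 ha, q2 hb]
  · linarith [p2 ha, q1 hb]
  · linarith [p2 ha, q2 hb]
  · linarith [p1 ha, q1 hb]
  · linarith [p1 ha, q2 hb]
  · linarith [p2 ha, q1 hb]
  · linarith [p2 ha, q2 hb]

end TsPart4

section TsPart5

variable {θ : ℝ} {X : Type*} [NormedAddCommGroup X] [NormedSpace ℝ X] {e : ℕ+ → X}

lemma ts_upper (h0 : 0 < θ) (h2 : θ ≤ 1/2) (k : ℕ) (hk : θ * k = 1)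
    (j : ℕ+) (F : Finset ℕ+) (hj : j ∉ F) (hjF : (j : ℕ) ≤ F.card) (hkF : k ≤ F.card) :
    tnorm θ (Schreier 1) (tsF (insert j F) fun _ => 1) ≤ θ * F.card := by
  classical
  have h1 : θ ≤ 1 := by linarith
  set A := insert j F with hA
  have hAc : A.card = F.card + 1 := Finset.card_insert_of_notMem hj
  have hkR : (k : ℝ) ≤ F.card := by exact_mod_cast hkF
  have h1F : 1 ≤ θ * F.card := by rw [← hk]; exact mul_le_mul_of_nonneg_left hkR h0.le
  apply tnorm_le_of h0 h1
  · intro i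
    rw [tsF_apply]
    split_ifs <;> simp only [abs_one, abs_zero] <;> linarith
  · intro d E hE
    rw [ts_adm_iff] at hE
    apply mul_le_mul_of_nonneg_left _ h0.le
    set s : Fin d → ℕ := fun l => (E l ∩ A).card with hs
    have hp : ∀ l, tsProj (E l) (tsF A fun _ => 1) = tsF (E l ∩ A) fun _ => 1 := by
      intro l; ext i
      rw [tsProj_apply, tsF_apply, tsF_apply]
      by_cases q1 : i ∈ E l <;> by_cases q2 : i ∈ A <;> simp [q1, q2]
    have hl1 : ∀ l, tsL1 (tsF (E l ∩ A) fun _ => 1) = s l := by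
      intro l; rw [tsL1_tsF]; simp [hs]
    have hb : ∀ l, tnorm θ (Schreier 1) (tsProj (E l) (tsF A fun _ => 1)) ≤ s l := by
      intro l; rw [hp, ← hl1]; exact tnorm_le_l1 h0 h1 _
    have hdisj : ∀ l m, l ≠ m → Disjoint (E l ∩ A) (E m ∩ A) := by
      intro l m hlm
      rw [Finset.disjoint_left]
      intro a ha hb
      have ha := (Finset.mem_inter.1 ha).1
      have hb := (Finset.mem_inter.1 hb).1
      rcases lt_or_gt_of_ne hlm with h | h
      · exact lt_irrefl _ (hE.2.1 l m h a ha a hb)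
      · exact lt_irrefl _ (hE.2.1 m l h a hb a ha)
    have hun : (Finset.univ.biUnion fun l => E l ∩ A).card = ∑ l, s l :=
      Finset.card_biUnion fun l _ m _ hlm => hdisj l m hlm
    have hsub : (Finset.univ.biUnion fun l => E l ∩ A) ⊆ A := by
      intro a ha
      obtain ⟨l, -, hl⟩ := Finset.mem_biUnion.1 ha
      exact (Finset.mem_inter.1 hl).2
    have hsum : ∑ l, s l ≤ F.card + 1 := by
      rw [← hun, ← hAc]; exact Finset.card_le_card hsub
    by_cases hcase : ∑ l, s l ≤ F.card
    · refine (Finset.sum_le_sum fun l _ => hb l).trans ?_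
      exact_mod_cast hcase
    · have hfull : (Finset.univ.biUnion fun l => E l ∩ A) = A :=
        Finset.eq_of_subset_of_card_le hsub (by rw [hun, hAc]; omega)
      have hjm : j ∈ (Finset.univ.biUnion fun l => E l ∩ A) := by
        rw [hfull, hA]; exact Finset.mem_insert_self _ _
      obtain ⟨l, -, hl⟩ := Finset.mem_biUnion.1 hjm
      have hdj := hE.2.2 l j (Finset.mem_inter.1 hl).1
      obtain ⟨m, hm⟩ : ∃ m, 2 ≤ s m := by
        by_contra hcon
        push Not at hcon
        have : ∑ l, s l ≤ ∑ l : Fin d, 1 := Finset.sum_le_sum fun l _ => by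
          have := hcon l; omega
        simp only [Finset.sum_const, Finset.card_univ, Fintype.card_fin, smul_eq_mul,
          mul_one] at this
        omega
      have hmR : (2 : ℝ) ≤ s m := by exact_mod_cast hm
      have hbm : tnorm θ (Schreier 1) (tsProj (E m) (tsF A fun _ => 1)) ≤ s m - 1 := by
        rw [hp]
        apply tnorm_le_sup_l1 h0 h1
        · intro i; rw [tsF_apply]
          split_ifs <;> simp only [abs_one, abs_zero] <;> linarith
        · rw [hl1]; nlinarith
      have h3 : ∑ l, tnorm θ (Schreier 1) (tsProj (E l) (tsF A fun _ => 1)) ≤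
          ∑ l, ((s l : ℝ) - if l = m then 1 else 0) := by
        refine Finset.sum_le_sum fun l _ => ?_
        by_cases hlm : l = m
        · subst hlm; simpa using hbm
        · simpa [hlm] using hb l
      rw [Finset.sum_sub_distrib] at h3
      simp only [Finset.sum_ite_eq', Finset.mem_univ, if_true] at h3
      have h4 : (∑ l, (s l : ℝ)) ≤ F.card + 1 := by exact_mod_cast hsum
      linarith

lemma ts_lower (h0 : 0 < θ) (h1 : θ ≤ 1) (hX : IsTsirelsonSpace θ 1 X e)
    (A : Finset ℕ+) (hA : ∀ a ∈ A, A.card ≤ (a : ℕ)) :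
    θ * A.card ≤ ‖tsW e A fun _ => 1‖ := by
  classical
  set b : ℕ+ → ℝ := fun i => if i ∈ A then 1 else 0 with hb
  have hAb : tsW e A (fun _ => 1) = tsW e A b :=
    Finset.sum_congr rfl fun i hi => by simp [hb, hi]
  rw [hAb]
  set s : Finset ℕ := A.image PNat.val with hs
  have hsc : s.card = A.card := Finset.card_image_of_injective _ PNat.coe_injective
  have h := tsW_lb h0 h1 hX b ‖tsW e A b‖ (by
      intro B
      have : tsW e B b = tsW e (B ∩ A) b := by
        symm
        apply Finset.sum_subset Finset.inter_subset_left
        intro x hx hx'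
        have : x ∉ A := fun h => hx' (Finset.mem_inter.2 ⟨hx, h⟩)
        simp [hb, this]
      rw [this]
      exact tsW_mono h0 h1 hX Finset.inter_subset_right fun _ _ => le_rfl)
    s (fun n => {n.toPNat'}) (by
      intro i hi j hj hij a ha b hb
      simp only [Finset.mem_singleton] at ha hb
      obtain ⟨i', -, rfl⟩ := Finset.mem_image.1 hi
      obtain ⟨j', -, rfl⟩ := Finset.mem_image.1 hj
      rw [PNat.coe_toPNat'] at ha hb
      subst ha hb
      exact hij) (by
      intro i hi a ha
      simp only [Finset.mem_singleton] at ha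
      obtain ⟨i', hi', rfl⟩ := Finset.mem_image.1 hi
      rw [PNat.coe_toPNat'] at ha
      subst ha
      rw [hsc]; exact hA _ hi')
  refine le_trans (le_of_eq ?_) h
  congr 1
  rw [hs, Finset.sum_image (fun _ _ _ _ h => PNat.coe_injective h)]
  rw [Finset.card_eq_sum_ones, Nat.cast_sum]
  refine Finset.sum_congr rfl fun i hi => ?_
  rw [PNat.coe_toPNat']
  simp [tsW, hb, hi, ts_norm_e h0 h1 hX]

lemma ts_perm_le (h0 : 0 < θ) (h2 : θ ≤ 1/2) (hX : IsTsirelsonSpace θ 1 X e)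
    {u v : X → X} (H : TsIso u v) (ε : ℕ+ → ℝ) (hε : ∀ i, |ε i| = 1) (p : Equiv.Perm ℕ+)
    (hp : ∀ i, u (e i) = ε i • e (p i)) (A : Finset ℕ+) (hA : A.Nonempty) :
    ‖tsW e A fun _ => 1‖ ≤ ‖tsW e (A.map p.toEmbedding) fun _ => 1‖ := by
  have h1 : θ ≤ 1 := by linarith
  set x0 := tsW e A fun _ => 1 with hx0
  obtain ⟨a, ha⟩ := hA
  have hN : 0 < ‖x0‖ := by
    have := tsW_abs_le h0 h1 hX A (fun _ => 1) a ha
    simp only [abs_one] at this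
    linarith
  set x := ‖x0‖⁻¹ • x0 with hx
  have nx : ‖x‖ = 1 := by rw [hx, norm_smul, norm_inv, norm_norm, inv_mul_cancel₀ hN.ne']
  have : ‖x0‖ = ‖‖x0‖ • u x‖ := by rw [norm_smul, H.un x nx, norm_norm, mul_one]
  rw [this]
  apply ts_mono h0 h1 hX
  intro j
  obtain ⟨i, rfl⟩ := p.surjective j
  rw [tsC_smul, ts_coord h0 h2 hX H i (p i) (ε i) (hε i) (hp i) x nx, tsC_W, hx, tsC_smul,
    abs_mul, abs_mul, hε, one_mul, ← abs_mul, mul_inv_cancel_left₀ hN.ne', hx0, tsC_W]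
  simp

lemma ts_perm_ge (h0 : 0 < θ) (h2 : θ ≤ 1/2) (hX : IsTsirelsonSpace θ 1 X e)
    (k : ℕ) (hk2 : 2 ≤ k) (hk : θ * k = 1)
    {u v : X → X} (H : TsIso u v) (ε : ℕ+ → ℝ) (hε : ∀ i, |ε i| = 1) (p : Equiv.Perm ℕ+)
    (hp : ∀ i, u (e i) = ε i • e (p i)) (i : ℕ+) (hi : k < (i : ℕ)) : i ≤ p i := by
  have h1 : θ ≤ 1 := by linarith
  by_contra hlt
  push Not at hlt
  have hlt' : (p i : ℕ) < (i : ℕ) := hlt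
  set D : ℕ := max (p i : ℕ) k with hD
  have hDi : D < (i : ℕ) := max_lt hlt' hi
  have hDk : k ≤ D := le_max_right _ _
  have hDp : (p i : ℕ) ≤ D := le_max_left _ _
  set F : Finset ℕ+ := Finset.Ioc i (i + D.toPNat (by omega)) with hF
  have hFc : F.card = D := by rw [hF, PNat.card_Ioc, PNat.add_coe]; simp [Nat.toPNat]
  have hiF : i ∉ F := by simp [hF]
  have hAc : (insert i F).card = D + 1 := by rw [Finset.card_insert_of_notMem hiF, hFc]
  have hlow := ts_lower h0 h1 hX (insert i F) (by
    intro a ha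
    rw [hAc]
    rcases Finset.mem_insert.1 ha with rfl | ha
    · omega
    · have : (i : ℕ) < (a : ℕ) := (Finset.mem_Ioc.1 ha).1
      omega)
  have hle := ts_perm_le h0 h2 hX H ε hε p hp (insert i F) (Finset.insert_nonempty _ _)
  rw [tsW_norm hX, tsW_norm hX, Finset.map_insert] at hle
  have hpF : (F.map p.toEmbedding).card = D := by rw [Finset.card_map, hFc]
  have hup := ts_upper h0 h2 k hk (p i) (F.map p.toEmbedding) (by simpa using hiF)
    (by rw [hpF]; exact hDp) (by rw [hpF]; exact hDk)
  rw [hAc] at hlow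
  rw [hpF] at hup
  rw [tsW_norm hX] at hlow
  have : tnorm θ (Schreier 1) (tsF (insert i F) fun _ => 1) ≤ θ * D := hle.trans hup
  push_cast at hlow
  nlinarith

end TsPart5

/-- For integer `θ⁻¹ = k ≥ 2`, every surjective isometry of the unit
sphere of `T[θ, S₁]` acts on basis expansions by `∑ aᵢ eᵢ ↦ ∑ εᵢ aᵢ e_{π i}`, with `π`
a permutation of `{1, …, θ⁻¹}` fixing all larger indices. -/
theorem tsirelson_sphere_isometry_form_S1
    (θ : ℝ) (hθ0 : 0 < θ) (k : ℕ) (hk : 2 ≤ k) (hθk : θ⁻¹ = (k : ℝ))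
    (X : Type*) [NormedAddCommGroup X] [NormedSpace ℝ X] (e : ℕ+ → X)
    (hX : IsTsirelsonSpace θ 1 X e)
    (U : Metric.sphere (0 : X) 1 → Metric.sphere (0 : X) 1)
    (hU : Isometry U) (hUsurj : Function.Surjective U) :
    ∃ (ε : ℕ+ → ℝ) (π : Equiv.Perm ℕ+),
      (∀ i, ε i = 1 ∨ ε i = -1) ∧
      (∀ i : ℕ+, k < (i : ℕ) → π i = i) ∧
      ∀ (x : Metric.sphere (0 : X) 1) (a : ℕ+ → ℝ),
        HasSum (fun i => a i • e i) (x : X) →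
        HasSum (fun i => (ε i * a i) • e (π i)) ((U x : X)) := by
  have hk' : θ * k = 1 := by rw [← hθk]; exact mul_inv_cancel₀ hθ0.ne'
  have hkR : (2 : ℝ) ≤ k := by exact_mod_cast hk
  have h2 : θ ≤ 1/2 := by nlinarith
  have h1 : θ ≤ 1 := by linarith
  classical
  have : Nonempty (Metric.sphere (0 : X) 1) :=
    ⟨⟨e 1, by simpa using ts_norm_e hθ0 h1 hX 1⟩⟩
  obtain ⟨V, hVU⟩ := hU.injective.hasLeftInverse
  have hUV : ∀ y, U (V y) = y := by
    intro y
    obtain ⟨x, rfl⟩ := hUsurj y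
    rw [hVU]
  set u : X → X := fun x => if h : x ∈ Metric.sphere (0 : X) 1 then (U ⟨x, h⟩ : X) else 0 with hu
  set v : X → X := fun x => if h : x ∈ Metric.sphere (0 : X) 1 then (V ⟨x, h⟩ : X) else 0 with hv
  have mem : ∀ x : X, ‖x‖ = 1 → x ∈ Metric.sphere (0 : X) 1 := fun x hx => by simpa using hx
  have hus : ∀ x : Metric.sphere (0 : X) 1, u x = U x := fun x => by
    simp only [hu]; rw [dif_pos x.2]
  have hvs : ∀ x : Metric.sphere (0 : X) 1, v x = V x := fun x => by
    simp only [hv]; rw [dif_pos x.2]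
  have ns : ∀ x : Metric.sphere (0 : X) 1, ‖(x : X)‖ = 1 := fun x => by simpa using x.2
  have H : TsIso u v :=
    { un := fun x hx => by rw [hus ⟨x, mem x hx⟩]; exact ns _
      vn := fun x hx => by rw [hvs ⟨x, mem x hx⟩]; exact ns _
      vu := fun x hx => by rw [hus ⟨x, mem x hx⟩, hvs, hVU]
      uv := fun x hx => by rw [hvs ⟨x, mem x hx⟩, hus, hUV]
      iso := fun x y hx hy => by
        rw [hus ⟨x, mem x hx⟩, hus ⟨y, mem y hy⟩, ← dist_eq_norm, ← dist_eq_norm]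
        exact hU.dist_eq ⟨x, mem x hx⟩ ⟨y, mem y hy⟩ }
  choose ε p hε hp using ts_exists_axis hθ0 hX k hk hk' h2 H
  choose δ q hδ hq using ts_exists_axis hθ0 hX k hk hk' h2 H.flip
  have einj : ∀ (s t : ℝ) (i j : ℕ+), |s| = 1 → s • e i = t • e j → i = j := by
    intro s t i j hs h
    by_contra hij
    have h3 : tsC hX (s • e i) i = tsC hX (t • e j) i := by rw [h]
    rw [tsC_smul, tsC_smul, tsC_e, tsC_e, if_pos rfl, if_neg hij] at h3
    rw [mul_one, mul_zero] at h3
    rw [h3] at hs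
    simp at hs
  have hqp : ∀ i, q (p i) = i := fun i =>
    einj _ _ _ _ (hδ _) ((hq (p i)).symm.trans
      (ts_axis_flip hθ0 h2 hX H i (p i) (ε i) (hε i) (hp i)))
  have hpq : ∀ i, p (q i) = i := fun i =>
    einj _ _ _ _ (hε _) ((hp (q i)).symm.trans
      (ts_axis_flip hθ0 h2 hX H.flip i (q i) (δ i) (hδ i) (hq i)))
  set π : Equiv.Perm ℕ+ := ⟨p, q, hqp, hpq⟩ with hπ
  refine ⟨ε, π, fun i => ts_pm (hε i), ?_, ?_⟩
  · intro i hi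
    have g1 := ts_perm_ge hθ0 h2 hX k hk hk' H ε hε π hp i hi
    have g1' : (i : ℕ) ≤ (π i : ℕ) := g1
    have g2 := ts_perm_ge hθ0 h2 hX k hk hk' H.flip δ hδ π.symm hq (π i) (by omega)
    rw [Equiv.symm_apply_apply] at g2
    exact le_antisymm g2 g1
  · intro x a ha
    have h3 := tsC_hasSum hX (U x : X)
    rw [← π.hasSum_iff] at h3
    convert h3 using 2 with i
    have := ts_coord hθ0 h2 hX H i (p i) (ε i) (hε i) (hp i) x (ns x)
    rw [hus, tsC_unique hX ha] at this
    simp only [Function.comp]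
    rw [show π i = p i from rfl, this]
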